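/- arXiv:2403.08027 — 3 statements merged into one kernel-verified Lean document; each statement's English description precedes it below -/
import Mathlib

section
/- The universal code length L is strictly increasing above 1: for all real numbers x, y with 1 ≤ x < y, one has L(x) < L(y). In particular L(x) > 0 for every x > 1, and L(x) = 0 for x ≤ 1. -/
/-!
The map `log2` sends `(-∞, 1]` into `(-∞, 0]`, so all later terms of the series vanish once an iterate
drops to `1` or below; since `n + 2 ≤ 2 ^ (n + 1)`, this happens after at most `n` steps when
`x ≤ n + 1` (`log2_iterate_le_one`), and the series is a finite sum. Each term is monotone in `x`
(`log2_iterate_le_max`), and the first term `max (log2 x) 0` is strictly increasing on `[1, ∞)`.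
Positivity above `1` follows by comparing with `L 1 = 0`.
-/

/-- Base-2 logarithm, taking the value 0 on nonpositive inputs
(the truncation of Mathlib's `Real.logb 2`). -/
noncomputable def log2 (x : ℝ) : ℝ := if x ≤ 0 then 0 else Real.logb 2 x

/-- The universal code length `L(x) = ∑_{k=1}^∞ max (log₂^[k] x) 0`. -/
noncomputable def ucl (x : ℝ) : ℝ := ∑' k : ℕ, max (log2^[k + 1] x) 0

theorem log2_nonpos {x : ℝ} (hx : x ≤ 1) : log2 x ≤ 0 := by
  unfold log2
  split_ifs with h
  · exact le_rfl
  · exact Real.logb_nonpos (by norm_num) (not_le.mp h).le hx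

theorem log2_lt_log2 {x y : ℝ} (hx : 0 < x) (hxy : x < y) : log2 x < log2 y := by
  unfold log2
  rw [if_neg hx.not_ge, if_neg (hx.trans hxy).not_ge]
  exact Real.logb_lt_logb (by norm_num) hx hxy

theorem log2_iterate_nonpos (k : ℕ) {x : ℝ} (hx : x ≤ 1) : log2^[k + 1] x ≤ 0 := by
  induction k with
  | zero => exact log2_nonpos hx
  | succ k ih =>
    rw [Function.iterate_succ_apply']
    exact log2_nonpos (ih.trans zero_le_one)

theorem log2_iterate_le_one (n : ℕ) {x : ℝ} (hx : x ≤ n + 1) : log2^[n] x ≤ 1 := by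
  induction n generalizing x with
  | zero => simpa using hx
  | succ n ih =>
    rw [Function.iterate_succ_apply]
    apply ih
    unfold log2
    split_ifs with h
    · positivity
    · rw [Real.logb_le_iff_le_rpow (by norm_num) (not_le.mp h)]
      have h2 : n + 1 < 2 ^ (n + 1) := Nat.lt_two_pow_self
      have h3 : ((n + 1 : ℕ) : ℝ) + 1 ≤ (2 : ℝ) ^ (n + 1) := by exact_mod_cast h2
      have h4 : (2 : ℝ) ^ ((n : ℝ) + 1) = (2 : ℝ) ^ (n + 1) := by
        exact_mod_cast Real.rpow_natCast 2 (n + 1)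
      rw [h4]
      exact hx.trans h3

/-- The iterates of `log2` are not themselves monotone, because of the junk value at nonpositive
inputs; truncating at `0` restores monotonicity. -/
theorem log2_iterate_le_max (k : ℕ) {x y : ℝ} (hxy : x ≤ y) :
    log2^[k + 1] x ≤ max (log2^[k + 1] y) 0 := by
  induction k generalizing x y with
  | zero =>
    rcases le_or_gt x 1 with hx | hx
    · exact (log2_iterate_nonpos 0 hx).trans (le_max_right _ _)
    · rcases hxy.eq_or_lt with rfl | h
      · exact le_max_left _ _
      · exact (log2_lt_log2 (zero_lt_one.trans hx) h).le.trans (le_max_left _ _)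
  | succ k ih =>
    rcases le_or_gt x 1 with hx | hx
    · exact (log2_iterate_nonpos _ hx).trans (le_max_right _ _)
    · rw [Function.iterate_succ_apply _ (k + 1) x, Function.iterate_succ_apply _ (k + 1) y]
      apply ih
      rcases hxy.eq_or_lt with rfl | h
      · exact le_rfl
      · exact (log2_lt_log2 (zero_lt_one.trans hx) h).le

theorem ucl_summable (x : ℝ) : Summable fun k : ℕ => max (log2^[k + 1] x) 0 := by
  obtain ⟨n, hn⟩ := exists_nat_ge x
  apply summable_of_ne_finset_zero (s := Finset.range n)
  intro k hk
  obtain ⟨m, rfl⟩ := Nat.exists_eq_add_of_le (not_lt.mp (fun h => hk (Finset.mem_range.mpr h)))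
  apply max_eq_right
  rw [show n + m + 1 = (m + 1) + n by ring, Function.iterate_add_apply]
  exact log2_iterate_nonpos m (log2_iterate_le_one n (by linarith))

theorem ucl_eq_zero {x : ℝ} (hx : x ≤ 1) : ucl x = 0 := by
  unfold ucl
  simp only [max_eq_right (log2_iterate_nonpos _ hx), tsum_zero]

theorem ucl_lt_ucl {x y : ℝ} (hx : 1 ≤ x) (hxy : x < y) : ucl x < ucl y := by
  refine Summable.tsum_lt_tsum (i := 0)
    (fun k => max_le (log2_iterate_le_max k hxy.le) (le_max_right _ _)) ?_
    (ucl_summable x) (ucl_summable y)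
  have h1 : log2 1 = 0 := by simp [log2]
  have hy : 0 < log2 y := h1 ▸ log2_lt_log2 one_pos (hx.trans_lt hxy)
  have h := log2_lt_log2 (one_pos.trans_le hx) hxy
  exact (max_lt h hy).trans_le (le_max_left _ _)

/-- `L` is strictly increasing above `1`; `L x > 0` for `x > 1`; `L x = 0` for `x ≤ 1`. -/
theorem ucl_strictMono :
    (∀ x y : ℝ, 1 ≤ x → x < y → ucl x < ucl y) ∧
    (∀ x : ℝ, 1 < x → 0 < ucl x) ∧
    (∀ x : ℝ, x ≤ 1 → ucl x = 0) := by
  refine ⟨fun x y => ucl_lt_ucl, fun x hx => ?_, fun x => ucl_eq_zero⟩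
  simpa [ucl_eq_zero le_rfl] using ucl_lt_ucl le_rfl hx
end

section
/- The universal code length is sublinear: L(x)/x tends to 0 as x tends to infinity (Tendsto (fun x => L x / x) atTop (𝓝 0)). -/
/-- The factor `3/4` is what makes `C = 3` satisfy `(3/4) * (1 + C) ≤ C` in the induction of
`sum_iterate_le`. -/
lemma max_log2_le (y : ℝ) : max (log2 y) 0 ≤ 3 / 4 * max y 0 := by
  unfold log2
  split_ifs with h
  · simp
  · push Not at h
    rw [max_eq_left h.le]
    refine max_le ?_ (by positivity)
    -- Tangent line of `log` at `2`.
    have h1 := Real.log_le_sub_one_of_pos (half_pos h)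
    rw [Real.log_div h.ne' two_ne_zero] at h1
    have h2 := Real.log_two_gt_d9
    have h3 := Real.log_two_lt_d9
    rw [Real.logb, div_le_iff₀ (by linarith)]
    nlinarith

lemma sum_iterate_succ (n : ℕ) (y : ℝ) :
    ∑ k ∈ Finset.range (n + 1), max (log2^[k + 1] y) 0 =
      ∑ k ∈ Finset.range n, max (log2^[k + 1] (log2 y)) 0 + max (log2 y) 0 := by
  rw [Finset.sum_range_succ']
  simp [Function.iterate_succ_apply]

lemma sum_iterate_le (n : ℕ) (y : ℝ) :
    ∑ k ∈ Finset.range n, max (log2^[k + 1] y) 0 ≤ 3 * max y 0 := by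
  induction n generalizing y with
  | zero => simp
  | succ n ih =>
    rw [sum_iterate_succ]
    linarith [ih (log2 y), max_log2_le y]

lemma ucl_le (x : ℝ) : ucl x ≤ 4 * max (log2 x) 0 := by
  refine Real.tsum_le_of_sum_range_le (fun _ => le_max_right _ _) fun n => ?_
  cases n with
  | zero => simp
  | succ n =>
    rw [sum_iterate_succ]
    linarith [sum_iterate_le n (log2 x)]

lemma ucl_nonneg (x : ℝ) : 0 ≤ ucl x := tsum_nonneg fun _ => le_max_right _ _

/-- The universal code length is sublinear: `L x / x → 0` as `x → ∞`. -/
theorem ucl_sublinear :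
    Filter.Tendsto (fun x : ℝ => ucl x / x) Filter.atTop (nhds 0) := by
  have hlim : Filter.Tendsto (fun x : ℝ => 4 / Real.log 2 * (Real.log x / x))
      Filter.atTop (nhds 0) := by
    simpa using (Real.isLittleO_log_id_atTop.tendsto_div_nhds_zero).const_mul (4 / Real.log 2)
  refine tendsto_of_tendsto_of_tendsto_of_le_of_le' tendsto_const_nhds hlim ?_ ?_
  · filter_upwards [Filter.eventually_ge_atTop 1] with x hx
    exact div_nonneg (ucl_nonneg x) (by linarith)
  · filter_upwards [Filter.eventually_ge_atTop 1] with x hx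
    have h := ucl_le x
    have hx0 : 0 < x := by linarith
    rw [log2, if_neg hx0.not_ge, max_eq_left (Real.logb_nonneg one_lt_two hx), Real.logb] at h
    calc ucl x / x ≤ 4 * (Real.log x / Real.log 2) / x := by gcongr
      _ = 4 / Real.log 2 * (Real.log x / x) := by ring
end

section
/- For a fixed smallest radius r₁ > 0, the per-point McCatch score w(d) = L(1 + d/r₁) is strictly increasing in d on [0, ∞), and w(d) > 0 whenever d > 0. Hence the per-point scores of points at positive distance from their nearest inlier are positive real numbers, and ranking points by score is equivalent to ranking them by distance to the nearest inlier. -/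
/-- The base-2 logarithm truncated below at `0`. -/
noncomputable def tlog (x : ℝ) : ℝ := max (log2 x) 0

lemma tlog_of_le_one {x : ℝ} (hx : x ≤ 1) : tlog x = 0 := by
  unfold tlog log2
  split_ifs with h
  · simp
  · exact max_eq_right (Real.logb_nonpos one_lt_two (by linarith) hx)

lemma tlog_of_one_le {x : ℝ} (hx : 1 ≤ x) : tlog x = Real.logb 2 x := by
  unfold tlog log2
  rw [if_neg (by linarith)]
  exact max_eq_left (Real.logb_nonneg one_lt_two hx)

lemma tlog_nonneg (x : ℝ) : 0 ≤ tlog x := le_max_right _ _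

lemma tlog_lt_tlog {x y : ℝ} (hx : 1 ≤ x) (hxy : x < y) : tlog x < tlog y := by
  rw [tlog_of_one_le hx, tlog_of_one_le (hx.trans hxy.le)]
  exact Real.logb_lt_logb one_lt_two (by linarith) hxy

lemma tlog_mono : Monotone tlog := by
  intro x y hxy
  rcases le_total x 1 with hx | hx
  · rw [tlog_of_le_one hx]
    exact tlog_nonneg y
  · rcases hxy.eq_or_lt with rfl | h
    · exact le_rfl
    · exact (tlog_lt_tlog hx h).le

lemma tlog_max_zero (y : ℝ) : tlog (max y 0) = tlog y := by
  rcases le_total y 0 with h | h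
  · rw [max_eq_right h, tlog_of_le_one zero_le_one, tlog_of_le_one (h.trans zero_le_one)]
  · rw [max_eq_left h]

lemma max_log2_iterate (k : ℕ) (x : ℝ) : max (log2^[k + 1] x) 0 = tlog^[k + 1] x := by
  induction k with
  | zero => rfl
  | succ k ih =>
    rw [Function.iterate_succ_apply' tlog, ← ih, tlog_max_zero, Function.iterate_succ_apply' log2]
    rfl

lemma ucl_eq (x : ℝ) : ucl x = ∑' k : ℕ, tlog^[k + 1] x := by
  simp only [ucl, max_log2_iterate]

lemma tlog_le (x : ℝ) : tlog x ≤ max (x - 2 / 5) 0 := by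
  rcases le_total x 1 with hx | hx
  · rw [tlog_of_le_one hx]
    exact le_max_right _ _
  · refine le_max_of_le_left ?_
    rw [tlog_of_one_le hx, Real.logb, div_le_iff₀ (Real.log_pos one_lt_two)]
    -- The tangent line of `log` at `2` is `x / 2 - 1 + log 2`, with slope `1 / 2 < log 2`.
    have h1 := Real.log_le_sub_one_of_pos (show 0 < x / 2 by linarith)
    rw [Real.log_div (by linarith) two_ne_zero] at h1
    have h2 := Real.log_two_gt_d9
    have h3 := Real.log_two_lt_d9
    nlinarith

lemma tlog_iterate_le (k : ℕ) (x : ℝ) : tlog^[k] x ≤ max (x - 2 / 5 * k) 0 := by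
  induction k with
  | zero => simp
  | succ k ih =>
    rw [Function.iterate_succ_apply']
    refine (tlog_le _).trans (max_le ?_ (le_max_right _ _))
    push_cast
    rcases le_max_iff.1 ih with h | h
    · exact le_max_of_le_left (by linarith)
    · exact le_max_of_le_right (by linarith)

lemma tlog_iterate_succ_nonneg (k : ℕ) (x : ℝ) : 0 ≤ tlog^[k + 1] x := by
  rw [Function.iterate_succ_apply']
  exact tlog_nonneg _

lemma summable_tlog_iterate (x : ℝ) : Summable fun k : ℕ => tlog^[k + 1] x := by
  obtain ⟨N, hN⟩ := exists_nat_gt (x / (2 / 5))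
  rw [div_lt_iff₀ (by norm_num)] at hN
  refine summable_of_ne_finset_zero (s := Finset.range N) fun k hk => ?_
  refine le_antisymm ((tlog_iterate_le _ _).trans (max_le ?_ le_rfl))
    (tlog_iterate_succ_nonneg k x)
  have hk' : (N : ℝ) ≤ k := by exact_mod_cast not_lt.1 (by simpa using hk)
  push_cast
  linarith

lemma ucl_strictMonoOn : StrictMonoOn ucl (Set.Ici 1) := by
  intro x hx y _ hxy
  rw [ucl_eq, ucl_eq]
  exact Summable.tsum_lt_tsum (i := 0) (fun k => tlog_mono.iterate (k + 1) hxy.le)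
    (tlog_lt_tlog hx hxy) (summable_tlog_iterate x) (summable_tlog_iterate y)

/-- The per-point McCatch score `w(d) = L(1 + d/r₁)` is strictly increasing in `d` on
`[0, ∞)`, positive for `d > 0`, and ranking points by score is equivalent to ranking
them by distance to the nearest inlier. -/
theorem perPoint_score_strictMono (r₁ : ℝ) (hr₁ : 0 < r₁) :
    StrictMonoOn (fun d : ℝ => ucl (1 + d / r₁)) (Set.Ici 0) ∧
    (∀ d : ℝ, 0 < d → 0 < ucl (1 + d / r₁)) ∧
    (∀ d d' : ℝ, 0 ≤ d → 0 ≤ d' →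
      (ucl (1 + d / r₁) < ucl (1 + d' / r₁) ↔ d < d')) := by
  have hmono : StrictMonoOn (fun d : ℝ => ucl (1 + d / r₁)) (Set.Ici 0) := by
    intro d hd d' hd' h
    have h0 : 0 ≤ d / r₁ := div_nonneg hd hr₁.le
    have h1 : 0 ≤ d' / r₁ := div_nonneg hd' hr₁.le
    refine ucl_strictMonoOn (Set.mem_Ici.2 (by linarith)) (Set.mem_Ici.2 (by linarith)) ?_
    gcongr
  refine ⟨hmono, fun d hd => ?_, fun d d' hd hd' => hmono.lt_iff_lt hd hd'⟩
  exact (ucl_nonneg _).trans_lt (hmono (Set.mem_Ici.2 le_rfl) (Set.mem_Ici.2 hd.le) hd)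
end
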